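/- arXiv:1108.2611 — 3 statements merged into one kernel-verified Lean document; each statement's English description precedes it below -/
import Mathlib

section
/- Fix h > 0 and τ > 0, and let Q(ω, h; τ) = (1/τ)√(2/(πτ)) (2h(1+τ) − ω) exp(−2h² − (ω − 2h)²/(2τ)) for ω < h(1+τ). Then ∫_{−∞}^{h(1+τ)} Q(ω, h; τ) dω = √(2/(πτ)) exp(−h²(1+τ)²/(2τ)) + 2h e^{−2h²} erfc( h(1−τ)/√(2τ) ), where erfc(x) = (2/√π) ∫_x^∞ e^{−u²} du. -/
open Real MeasureTheory Set

noncomputable def erfc (x : ℝ) : ℝ := (2 / Real.sqrt π) * ∫ u in Ioi x, Real.exp (-u ^ 2)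

lemma aux_sub (f : ℝ → ℝ) (m s a : ℝ) (hs : 0 < s) :
    ∫ ω in Iio (m - s * a), f ω = s * ∫ u in Ioi a, f (m - s * u) := by
  have h1 : ∫ u in Ioi a, f (m - s * u) = s⁻¹ * ∫ v in Ioi (s * a), f (m - v) := by
    simpa using integral_comp_mul_left_Ioi (fun v => f (m - v)) a hs
  have h2 : ∫ v in Ioi (s * a), f (m - v) = ∫ ω in Iio (m - s * a), f ω := by
    rw [← integral_indicator measurableSet_Ioi, ← integral_indicator measurableSet_Iio,
      ← integral_sub_left_eq_self _ volume m]
    congr 1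
    ext v
    simp only [indicator, mem_Ioi, mem_Iio, sub_sub_cancel, lt_sub_comm]
  rw [h1, h2, mul_inv_cancel_left₀ hs.ne']

lemma aux_int1 : Integrable (fun u : ℝ => Real.exp (-u ^ 2)) := by
  simpa using integrable_exp_neg_mul_sq (b := 1) one_pos

lemma aux_int2 : Integrable (fun u : ℝ => u * Real.exp (-u ^ 2)) := by
  simpa using integrable_mul_exp_neg_mul_sq (b := 1) one_pos

lemma aux_odd (a : ℝ) : ∫ u in Ioi a, u * Real.exp (-u ^ 2) = Real.exp (-a ^ 2) / 2 := by
  have ht : Filter.Tendsto (fun u : ℝ => -Real.exp (-u ^ 2) / 2) Filter.atTop (nhds 0) := by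
    have : Filter.Tendsto (fun u : ℝ => Real.exp (-u ^ 2)) Filter.atTop (nhds 0) :=
      Real.tendsto_exp_neg_atTop_nhds_zero.comp (Filter.tendsto_pow_atTop two_ne_zero)
    simpa using this.neg.div_const 2
  rw [integral_Ioi_of_hasDerivAt_of_tendsto' (f := fun u : ℝ => -Real.exp (-u ^ 2) / 2)
    (m := 0) ?_ aux_int2.integrableOn ht]
  · ring
  · intro x _
    have := (((hasDerivAt_pow 2 x).neg.exp).neg.div_const 2)
    refine HasDerivAt.congr_deriv this ?_
    simp
    ring

theorem stmt_6 (h τ : ℝ) (hh : 0 < h) (hτ : 0 < τ) :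
    (∫ ω in Iio (h * (1 + τ)),
        (1 / τ) * Real.sqrt (2 / (π * τ)) * (2 * h * (1 + τ) - ω) *
          Real.exp (-2 * h ^ 2 - (ω - 2 * h) ^ 2 / (2 * τ))) =
      Real.sqrt (2 / (π * τ)) * Real.exp (-h ^ 2 * (1 + τ) ^ 2 / (2 * τ)) +
        2 * h * Real.exp (-2 * h ^ 2) * erfc (h * (1 - τ) / Real.sqrt (2 * τ)) := by
  have hs : 0 < Real.sqrt (2 * τ) := by positivity
  have hs2 : Real.sqrt (2 * τ) ^ 2 = 2 * τ := Real.sq_sqrt (by positivity)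
  have hsc : Real.sqrt (2 * τ) * Real.sqrt (2 / (π * τ)) = 2 / Real.sqrt π := by
    rw [← Real.sqrt_mul (by positivity)]
    have : 2 * τ * (2 / (π * τ)) = 2 ^ 2 / π := by field_simp
    rw [this, Real.sqrt_div (by positivity), Real.sqrt_sq (by norm_num)]
  unfold erfc
  set s := Real.sqrt (2 * τ) with hsdef
  set c := Real.sqrt (2 / (π * τ)) with hcdef
  set a := h * (1 - τ) / s with ha
  have hsa : s * a = h * (1 - τ) := by rw [ha]; field_simp
  have hb : h * (1 + τ) = 2 * h - s * a := by rw [hsa]; ring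
  have ha2 : a ^ 2 = (h * (1 - τ)) ^ 2 / (2 * τ) := by rw [ha, div_pow, hs2]
  have he : Real.exp (-h ^ 2 * (1 + τ) ^ 2 / (2 * τ)) =
      Real.exp (-2 * h ^ 2) * Real.exp (-a ^ 2) := by
    rw [← Real.exp_add, ha2]
    congr 1
    field_simp
    ring
  rw [hb, aux_sub _ _ _ _ hs]
  have hf : ∀ u : ℝ, (1 / τ) * c * (2 * h * (1 + τ) - (2 * h - s * u)) *
      Real.exp (-2 * h ^ 2 - (2 * h - s * u - 2 * h) ^ 2 / (2 * τ)) =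
      (2 * h * c * Real.exp (-2 * h ^ 2)) * Real.exp (-u ^ 2) +
      ((1 / τ) * c * s * Real.exp (-2 * h ^ 2)) * (u * Real.exp (-u ^ 2)) := by
    intro u
    have : -2 * h ^ 2 - (2 * h - s * u - 2 * h) ^ 2 / (2 * τ) = -2 * h ^ 2 + -u ^ 2 := by
      have : (2 * h - s * u - 2 * h) ^ 2 = 2 * τ * u ^ 2 := by rw [← hs2]; ring
      rw [this]
      field_simp
      ring
    rw [this, Real.exp_add]
    field_simp
    ring
  simp_rw [hf]
  rw [integral_add (aux_int1.integrableOn.const_mul _) (aux_int2.integrableOn.const_mul _),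
    integral_const_mul, integral_const_mul, aux_odd, he, ← hsc]
  have : s * (1 / τ * c * s * Real.exp (-2 * h ^ 2) * (Real.exp (-a ^ 2) / 2)) =
      c * (Real.exp (-2 * h ^ 2) * Real.exp (-a ^ 2)) := by
    calc _ = s ^ 2 * (1 / τ * c * Real.exp (-2 * h ^ 2) * (Real.exp (-a ^ 2) / 2)) := by ring
      _ = _ := by rw [hs2]; field_simp
  rw [mul_add, this]
  ring
end

section
/- Fix h > 0 and τ > 0, and let Q(ω, h; τ) = (1/τ)√(2/(πτ)) (2h(1+τ) − ω) exp(−2h² − (ω−2h)²/(2τ)) and P(ω, h, τ) = 1 − e^{−2h(h(1+τ) − ω)}. Then ∫_{−∞}^{h(1+τ)} Q(ω, h; τ) P(ω, h, τ) dω = 2h e^{−2h²} erfc( h(1−τ)/√(2τ) ), where erfc(x) = (2/√π) ∫_x^∞ e^{−u²} du. -/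
open Real MeasureTheory Set

theorem aux_tendsto (c τ : ℝ) (hτ : 0 < τ) :
    Filter.Tendsto (fun ω : ℝ => τ * Real.exp (-(ω - c) ^ 2 / (2 * τ))) Filter.atBot (nhds 0) := by
  have h1 : Filter.Tendsto (fun ω : ℝ => ω - c) Filter.atBot Filter.atBot :=
    Filter.tendsto_atBot_add_const_right _ (-c) Filter.tendsto_id
  have h2 : Filter.Tendsto (fun ω : ℝ => (ω - c) ^ 2) Filter.atBot Filter.atTop := by
    have := h1.atBot_mul_atBot₀ h1
    simpa [pow_two] using this
  have h3 : Filter.Tendsto (fun ω : ℝ => -((ω - c) ^ 2 / (2 * τ))) Filter.atBot Filter.atBot :=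
    Filter.tendsto_neg_atTop_atBot.comp (h2.atTop_div_const (by positivity))
  have h4 := (Real.tendsto_exp_atBot.comp h3).const_mul τ
  simpa [Function.comp_def, neg_div] using h4

theorem aux_int (c τ : ℝ) (hτ : 0 < τ) :
    Integrable (fun ω : ℝ => (c - ω) * Real.exp (-(ω - c) ^ 2 / (2 * τ))) := by
  have h1 := ((integrable_mul_exp_neg_mul_sq (b := 1 / (2 * τ)) (by positivity)).comp_sub_right c).neg
  refine h1.congr (Filter.Eventually.of_forall fun ω => ?_)
  simp only [Pi.neg_apply]
  rw [show -(1 / (2 * τ)) * (ω - c) ^ 2 = -(ω - c) ^ 2 / (2 * τ) by ring]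
  ring

theorem aux_int0 (c τ : ℝ) (hτ : 0 < τ) :
    Integrable (fun ω : ℝ => Real.exp (-(ω - c) ^ 2 / (2 * τ))) := by
  have h1 := ((integrable_exp_neg_mul_sq (b := 1 / (2 * τ)) (by positivity)).comp_sub_right c)
  refine h1.congr (Filter.Eventually.of_forall fun ω => ?_)
  simp only
  rw [show -(1 / (2 * τ)) * (ω - c) ^ 2 = -(ω - c) ^ 2 / (2 * τ) by ring]

theorem aux_val (a c τ : ℝ) (hτ : 0 < τ) :
    ∫ ω in Iio a, (c - ω) * Real.exp (-(ω - c) ^ 2 / (2 * τ)) =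
      τ * Real.exp (-(a - c) ^ 2 / (2 * τ)) := by
  rw [← integral_Iic_eq_integral_Iio]
  have := integral_Iic_of_hasDerivAt_of_tendsto' (a := a)
    (f := fun ω : ℝ => τ * Real.exp (-(ω - c) ^ 2 / (2 * τ)))
    (f' := fun ω : ℝ => (c - ω) * Real.exp (-(ω - c) ^ 2 / (2 * τ))) (m := 0) ?_
    (aux_int c τ hτ).integrableOn (aux_tendsto c τ hτ)
  · simpa using this
  · intro x _
    have h1 : HasDerivAt (fun ω : ℝ => -(ω - c) ^ 2 / (2 * τ)) ((c - x) / τ) x := by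
      have := ((((hasDerivAt_id x).sub_const c).pow 2).neg).div_const (2 * τ)
      refine HasDerivAt.congr_deriv this ?_
      simp only [id]
      field_simp
      ring
    refine (h1.exp.const_mul τ).congr_deriv ?_
    field_simp

theorem aux_gauss (a c τ : ℝ) (hτ : 0 < τ) :
    ∫ ω in Iio a, Real.exp (-(ω - c) ^ 2 / (2 * τ)) =
      Real.sqrt (2 * τ) * ∫ u in Ioi ((c - a) / Real.sqrt (2 * τ)), Real.exp (-u ^ 2) := by
  have hs : 0 < Real.sqrt (2 * τ) := by positivity
  have hs2 : Real.sqrt (2 * τ) ^ 2 = 2 * τ := Real.sq_sqrt (by positivity)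
  have h1 := integral_comp_mul_left_Ioi (fun u : ℝ => Real.exp (-u ^ 2)) (c - a) (inv_pos.2 hs)
  rw [inv_inv, smul_eq_mul, inv_mul_eq_div] at h1
  rw [← h1, ← integral_indicator measurableSet_Iio, ← integral_indicator measurableSet_Ioi,
    ← integral_sub_left_eq_self _ _ c]
  congr 1
  ext x
  by_cases hx : x ∈ Ioi (c - a)
  · have hx' : c - x ∈ Iio a := by simp only [mem_Ioi, mem_Iio] at *; linarith
    rw [indicator_of_mem hx, indicator_of_mem hx', mul_pow, inv_pow, hs2]
    congr 1
    ring
  · have hx' : c - x ∉ Iio a := by simp only [mem_Ioi, mem_Iio] at *; linarith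
    rw [indicator_of_notMem hx, indicator_of_notMem hx']

theorem stmt_11 (h τ : ℝ) (hh : 0 < h) (hτ : 0 < τ) :
    (∫ ω in Iio (h * (1 + τ)),
        ((1 / τ) * Real.sqrt (2 / (π * τ)) * (2 * h * (1 + τ) - ω) *
            Real.exp (-2 * h ^ 2 - (ω - 2 * h) ^ 2 / (2 * τ))) *
          (1 - Real.exp (-2 * h * (h * (1 + τ) - ω)))) =
      2 * h * Real.exp (-2 * h ^ 2) * erfc (h * (1 - τ) / Real.sqrt (2 * τ)) := by
  have key : ∀ ω : ℝ, ((1 / τ) * Real.sqrt (2 / (π * τ)) * (2 * h * (1 + τ) - ω) *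
            Real.exp (-2 * h ^ 2 - (ω - 2 * h) ^ 2 / (2 * τ))) *
          (1 - Real.exp (-2 * h * (h * (1 + τ) - ω))) =
      ((1 / τ) * Real.sqrt (2 / (π * τ)) * Real.exp (-2 * h ^ 2)) *
      (((2 * h - ω) * Real.exp (-(ω - 2 * h) ^ 2 / (2 * τ)) +
        (2 * h * τ) * Real.exp (-(ω - 2 * h) ^ 2 / (2 * τ))) -
        Real.exp (2 * h ^ 2) * ((2 * h * (1 + τ) - ω) *
          Real.exp (-(ω - 2 * h * (1 + τ)) ^ 2 / (2 * τ)))) := by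
    intro ω
    have e1 : Real.exp (-2 * h ^ 2 - (ω - 2 * h) ^ 2 / (2 * τ)) =
        Real.exp (-2 * h ^ 2) * Real.exp (-(ω - 2 * h) ^ 2 / (2 * τ)) := by
      rw [← Real.exp_add]; congr 1; ring
    have e2 : Real.exp (-(ω - 2 * h) ^ 2 / (2 * τ)) * Real.exp (-2 * h * (h * (1 + τ) - ω)) =
        Real.exp (2 * h ^ 2) * Real.exp (-(ω - 2 * h * (1 + τ)) ^ 2 / (2 * τ)) := by
      rw [← Real.exp_add, ← Real.exp_add]; congr 1; field_simp; ring
    rw [e1]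
    linear_combination (-((1 / τ) * Real.sqrt (2 / (π * τ)) * Real.exp (-2 * h ^ 2)) *
      (2 * h * (1 + τ) - ω)) * e2
  simp_rw [key]
  rw [integral_const_mul, integral_sub, integral_add, integral_const_mul, integral_const_mul,
    aux_val _ _ _ hτ, aux_val _ _ _ hτ, aux_gauss _ _ _ hτ]
  rotate_left
  · exact (aux_int _ _ hτ).integrableOn
  · exact ((aux_int0 _ _ hτ).const_mul _).integrableOn
  · exact ((aux_int _ _ hτ).add ((aux_int0 _ _ hτ).const_mul _)).integrableOn
  · exact ((aux_int _ _ hτ).const_mul _).integrableOn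
  have e3 : Real.exp (-(h * (1 + τ) - 2 * h) ^ 2 / (2 * τ)) =
      Real.exp (2 * h ^ 2) * Real.exp (-(h * (1 + τ) - 2 * h * (1 + τ)) ^ 2 / (2 * τ)) := by
    rw [← Real.exp_add]; congr 1; field_simp; ring
  have e4 : Real.sqrt (2 / (π * τ)) * Real.sqrt (2 * τ) = 2 / Real.sqrt π := by
    rw [← Real.sqrt_mul (by positivity),
      show 2 / (π * τ) * (2 * τ) = 2 ^ 2 / π by field_simp,
      Real.sqrt_div (by positivity), Real.sqrt_sq (by norm_num)]
  rw [e3, show 2 * h - h * (1 + τ) = h * (1 - τ) by ring, erfc, ← e4]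
  field_simp
  ring
end

section
/- For every h > 0, ∫₀¹ √(2/π) · h² / √(t³(1−t)³) · exp( −h²/(2t(1−t)) ) dt = 4h e^{−2h²}. -/
open Real MeasureTheory Set

theorem aux_deriv (t : ℝ) (ht : t ∈ Ioo (0:ℝ) 1) :
    HasDerivAt (fun t : ℝ => (t - 1/2) / Real.sqrt (t * (1 - t)))
      (1 / (4 * Real.sqrt (t ^ 3 * (1 - t) ^ 3))) t := by
  have hs : 0 < t * (1 - t) := mul_pos ht.1 (by linarith [ht.2])
  have hq : 0 < Real.sqrt (t * (1 - t)) := Real.sqrt_pos.2 hs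
  have hqq : Real.sqrt (t * (1 - t)) ^ 2 = t * (1 - t) := Real.sq_sqrt hs.le
  have h3 : Real.sqrt (t ^ 3 * (1 - t) ^ 3) = Real.sqrt (t * (1 - t)) ^ 3 := by
    have : t ^ 3 * (1 - t) ^ 3 = (Real.sqrt (t * (1 - t)) ^ 3) ^ 2 := by
      rw [← pow_mul, mul_comm 3 2, pow_mul, hqq, mul_pow]
    rw [this, Real.sqrt_sq (by positivity)]
  have hd : HasDerivAt (fun t : ℝ => t * (1 - t)) (1 * (1 - t) + t * (0 - 1)) t :=
    (hasDerivAt_id t).mul ((hasDerivAt_const t (1:ℝ)).sub (hasDerivAt_id t))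
  have := ((hasDerivAt_id t).sub_const (1/2)).div (hd.sqrt hs.ne') hq.ne'
  refine this.congr_deriv ?_
  rw [h3]
  simp only [id]
  generalize Real.sqrt (t * (1 - t)) = q at *
  field_simp
  rw [hqq]; ring

theorem aux_image : (fun t : ℝ => (t - 1/2) / Real.sqrt (t * (1 - t))) '' Ioo (0:ℝ) 1 = univ := by
  refine eq_univ_of_forall fun u => ?_
  have hr : 0 < Real.sqrt (1 + u ^ 2) := Real.sqrt_pos.2 (by positivity)
  have hrr : Real.sqrt (1 + u ^ 2) ^ 2 = 1 + u ^ 2 := Real.sq_sqrt (by positivity)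
  generalize Real.sqrt (1 + u ^ 2) = r at *
  have hu := abs_lt.1 (abs_lt_of_sq_lt_sq (by linarith : u ^ 2 < r ^ 2) hr.le)
  have h1 : u / r < 1 := by rw [div_lt_one hr]; exact hu.2
  have h2 : -1 < u / r := by rw [lt_div_iff₀ hr]; linarith [hu.1]
  refine ⟨(1 + u / r) / 2, ⟨by linarith, by linarith⟩, ?_⟩
  have hs : (1 + u / r) / 2 * (1 - (1 + u / r) / 2) = (1 / (2 * r)) ^ 2 := by
    field_simp
    linear_combination hrr
  simp only [hs]
  rw [Real.sqrt_sq (by positivity)]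
  field_simp
  ring

theorem stmt_16 (h : ℝ) (hh : 0 < h) :
    (∫ t in Ioo (0:ℝ) 1,
        Real.sqrt (2 / π) * h ^ 2 / Real.sqrt (t ^ 3 * (1 - t) ^ 3) *
          Real.exp (-h ^ 2 / (2 * t * (1 - t)))) =
      4 * h * Real.exp (-2 * h ^ 2) := by
  have hinj : InjOn (fun t : ℝ => (t - 1/2) / Real.sqrt (t * (1 - t))) (Ioo (0:ℝ) 1) := by
    refine (strictMonoOn_of_deriv_pos (convex_Ioo 0 1)
      (fun t ht => (aux_deriv t ht).continuousAt.continuousWithinAt) ?_).injOn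
    intro t ht
    rw [interior_Ioo] at ht
    rw [(aux_deriv t ht).deriv]
    have : 0 < t ^ 3 * (1 - t) ^ 3 := mul_pos (pow_pos ht.1 3) (pow_pos (by linarith [ht.2]) 3)
    have := Real.sqrt_pos.2 this
    positivity
  have key := integral_image_eq_integral_abs_deriv_smul measurableSet_Ioo
    (fun t ht => (aux_deriv t ht).hasDerivWithinAt) hinj
    (fun u => 4 * Real.sqrt (2 / π) * h ^ 2 * Real.exp (-2 * h ^ 2) *
      Real.exp (-(2 * h ^ 2) * u ^ 2))
  rw [aux_image, setIntegral_univ, integral_const_mul, integral_gaussian] at key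
  trans
  · refine (setIntegral_congr_fun measurableSet_Ioo ?_).trans key.symm
    intro t ht
    have ht0 : t ≠ 0 := ht.1.ne'
    have ht1 : 1 - t ≠ 0 := by linarith [ht.2]
    have hs : 0 < t * (1 - t) := mul_pos ht.1 (by linarith [ht.2])
    have he : -h ^ 2 / (2 * t * (1 - t)) =
        -2 * h ^ 2 + -(2 * h ^ 2) * ((t - 1/2) / Real.sqrt (t * (1 - t))) ^ 2 := by
      rw [div_pow, Real.sq_sqrt hs.le]
      field_simp
      ring
    simp only [he, Real.exp_add, smul_eq_mul]
    rw [abs_of_nonneg (by positivity)]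
    ring
  · have : Real.sqrt (2 / π) * Real.sqrt (π / (2 * h ^ 2)) = 1 / h := by
      rw [← Real.sqrt_mul (by positivity)]
      rw [show 2 / π * (π / (2 * h ^ 2)) = (1 / h) ^ 2 by field_simp]
      exact Real.sqrt_sq (by positivity)
    calc _ = 4 * h ^ 2 * Real.exp (-2 * h ^ 2) *
        (Real.sqrt (2 / π) * Real.sqrt (π / (2 * h ^ 2))) := by ring
      _ = _ := by rw [this]; field_simp
end
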